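/- Let u be a very weak solution with integrability deficit δ ∈ (0,1), and assume the p-intrinsic hypotheses. Then for every θ ∈ ((q−1)/p, δ] and every s ∈ [2ρ, 4ρ] there exists a constant c = c(data) such that ⨍_{Q^π_s(z₀)} (|∇u|^{p−1} + a(z)|∇u|^{q−1} + |F|^{p−1} + a(z)|F|^{q−1}) dz ≤ c ⨍_{Q^π_s(z₀)} (|∇u| + |F|)^{p−1} dz + c π^{−1+p/q} ⨍_{Q^π_s(z₀)} a(z)^{(q−1)/q} (|∇u|^{q−1} + |F|^{q−1}) dz + c (⨍_{Q^π_s(z₀)} (|∇u| + |F|)^{θp} dz)^{(p−1)/(θp)}. -/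

import Mathlib

open MeasureTheory Set Metric Filter
open scoped ENNReal NNReal Topology BigOperators Classical

noncomputable section

namespace DoublePhase

/-- Spatial points: ℝⁿ. -/
abbrev Spc (n : ℕ) : Type := EuclideanSpace ℝ (Fin n)
/-- Space-time points `z = (x,t)`. -/
abbrev Pt (n : ℕ) : Type := Spc n × ℝ
/-- Values in ℝᴺ. -/
abbrev Vec (N : ℕ) : Type := Fin N → ℝ
/-- Matrices in ℝ^{N×n}. -/
abbrev Mat (N n : ℕ) : Type := Fin N → Fin n → ℝ

/-- Euclidean inner product on ℝᴺ. -/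
def vdot {N : ℕ} (v w : Vec N) : ℝ := ∑ i, v i * w i
/-- Euclidean norm on ℝᴺ. -/
def vnorm {N : ℕ} (v : Vec N) : ℝ := Real.sqrt (vdot v v)
/-- Euclidean inner product on ℝ^{N×n}. -/
def mdot {N n : ℕ} (A B : Mat N n) : ℝ := ∑ i, ∑ j, A i j * B i j
/-- Euclidean norm on ℝ^{N×n}. -/
def mnorm {N n : ℕ} (A : Mat N n) : ℝ := Real.sqrt (mdot A A)

/-- Parabolic cylinder `Q_{r,s}(z₀) = B_r(x₀) × (t₀−s, t₀+s)`. -/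
def Qrs {n : ℕ} (z₀ : Pt n) (r s : ℝ) : Set (Pt n) :=
  (Metric.ball z₀.1 r) ×ˢ (Set.Ioo (z₀.2 - s) (z₀.2 + s))

/-- Standard parabolic cylinder `Q_ρ(z₀) = B_ρ(x₀) × (t₀−ρ², t₀+ρ²)`. -/
def Qc {n : ℕ} (z₀ : Pt n) (ρ : ℝ) : Set (Pt n) := Qrs z₀ ρ (ρ ^ 2)

/-- The double-phase function `H(z,s) = s^p + a(z) s^q`. -/
def Hf {n : ℕ} (a : Pt n → ℝ) (p q : ℝ) (z : Pt n) (s : ℝ) : ℝ := s ^ p + a z * s ^ q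

/-- `p`-intrinsic cylinder `Q_ρ^λ(z₀) = B_ρ(x₀) × (t₀−λ^{2−p}ρ², t₀+λ^{2−p}ρ²)`. -/
def Qp {n : ℕ} (p : ℝ) (z₀ : Pt n) (lam ρ : ℝ) : Set (Pt n) :=
  Qrs z₀ ρ (lam ^ (2 - p) * ρ ^ 2)

/-- `(p,q)`-intrinsic cylinder `G_ρ^λ(z₀)`. -/
def Gpq {n : ℕ} (a : Pt n → ℝ) (p q : ℝ) (z₀ : Pt n) (lam ρ : ℝ) : Set (Pt n) :=
  Qrs z₀ ρ (lam ^ 2 / Hf a p q z₀ lam * ρ ^ 2)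

/-- The space-time domain `Ω_T = Ω × (0,T)`. -/
def cyl {n : ℕ} (Ω : Set (Spc n)) (T : ℝ) : Set (Pt n) := Ω ×ˢ Set.Ioo 0 T

/-- Spatial partial derivative `∂_{x_j} ψ` of a scalar test function. -/
def dxj {n : ℕ} (ψ : Pt n → ℝ) (j : Fin n) (z : Pt n) : ℝ :=
  fderiv ℝ ψ z (EuclideanSpace.single j 1, 0)

/-- Time derivative `∂_t φ` of a vector-valued test function. -/
def dtd {n N : ℕ} (φ : Pt n → Vec N) (z : Pt n) : Vec N :=
  fderiv ℝ φ z ((0 : Spc n), (1 : ℝ))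

/-- Spatial gradient `∇φ` of a vector-valued test function, as a matrix. -/
def gradm {n N : ℕ} (φ : Pt n → Vec N) (z : Pt n) : Mat N n :=
  fun i j => fderiv ℝ (fun w => φ w i) z (EuclideanSpace.single j 1, 0)

/-- The structural setting of the parabolic double-phase problem:
`data = (n, N, p, q, α, L₁, L₂, [a]_α)` together with the bounded domain `Ω`,
time `T`, the coefficient `a`, the vector field `𝒜` and the source `F`. -/
structure Setting (n N : ℕ) (p q α L₁ L₂ aH : ℝ) where
  Ω : Set (Spc n)
  T : ℝ
  a : Pt n → ℝ
  A : Pt n → Mat N n → Mat N n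
  F : Pt n → Mat N n
  hn : 2 ≤ n
  hN : 1 ≤ N
  hΩo : IsOpen Ω
  hΩb : Bornology.IsBounded Ω
  hΩne : Ω.Nonempty
  hT : 0 < T
  hα : α ∈ Set.Ioc (0 : ℝ) 1
  hp2 : 2 < p
  hpq : p < q
  hqub : q < p + 2 * α / ((n : ℝ) + 2)
  hL₁ : 0 < L₁
  hL₁₂ : L₁ ≤ L₂
  haH : 0 < aH
  ha0 : ∀ z, 0 ≤ a z
  haM : Measurable a
  haB : BddAbove (Set.range a)
  haHol : ∀ x ∈ Ω, ∀ y ∈ Ω, ∀ t ∈ Set.Ioo (0 : ℝ) T, ∀ s ∈ Set.Ioo (0 : ℝ) T,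
    |a (x, t) - a (y, s)| ≤ aH * max (‖x - y‖ ^ α) (|t - s| ^ (α / 2))
  hAM : Measurable (Function.uncurry A)
  hAcoer : ∀ᵐ z ∂(volume.restrict (cyl Ω T)), ∀ ξ : Mat N n,
    L₁ * (mnorm ξ ^ p + a z * mnorm ξ ^ q) ≤ mdot (A z ξ) ξ
  hAgrow : ∀ᵐ z ∂(volume.restrict (cyl Ω T)), ∀ ξ : Mat N n,
    mnorm (A z ξ) ≤ L₂ * (mnorm ξ ^ (p - 1) + a z * mnorm ξ ^ (q - 1))
  hFM : Measurable F
  hFint : IntegrableOn (fun z => Hf a p q z (mnorm (F z))) (cyl Ω T)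

variable {n N : ℕ} {p q α L₁ L₂ aH : ℝ}

/-- The right-hand side field `|F|^{p−2}F + a|F|^{q−2}F`. -/
def rhsF (S : Setting n N p q α L₁ L₂ aH) (z : Pt n) : Mat N n :=
  fun i j => mnorm (S.F z) ^ (p - 2) * S.F z i j + S.a z * mnorm (S.F z) ^ (q - 2) * S.F z i j

/-- Very weak solution with integrability deficit `δ`: `u ∈ L¹(0,T;W^{1,1})` with
weak spatial gradient `Du`, `H(·,|Du|)^δ` integrable, satisfying the weak formulation. -/
structure VeryWeakSolution (S : Setting n N p q α L₁ L₂ aH)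
    (u : Pt n → Vec N) (Du : Pt n → Mat N n) (δ : ℝ) : Prop where
  hδ : δ ∈ Set.Ioo (0 : ℝ) 1
  huM : Measurable u
  hDuM : Measurable Du
  huL1 : IntegrableOn (fun z => vnorm (u z)) (cyl S.Ω S.T)
  hDuL1 : IntegrableOn (fun z => mnorm (Du z)) (cyl S.Ω S.T)
  hgrad : ∀ (i : Fin N) (j : Fin n) (ψ : Pt n → ℝ),
    ContDiff ℝ (⊤ : ℕ∞) ψ → HasCompactSupport ψ → tsupport ψ ⊆ cyl S.Ω S.T →
    ∫ z in cyl S.Ω S.T, u z i * dxj ψ j z = - ∫ z in cyl S.Ω S.T, Du z i j * ψ z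
  henergy : IntegrableOn (fun z => Hf S.a p q z (mnorm (Du z)) ^ δ) (cyl S.Ω S.T)
  hweak : ∀ φ : Pt n → Vec N,
    ContDiff ℝ (⊤ : ℕ∞) φ → HasCompactSupport φ → tsupport φ ⊆ cyl S.Ω S.T →
    ∫ z in cyl S.Ω S.T, (-(vdot (u z) (dtd φ z)) + mdot (S.A z (Du z)) (gradm φ z))
      = ∫ z in cyl S.Ω S.T, mdot (rhsF S z) (gradm φ z)

/-- `H(z,|∇u|)`. -/
def HDu (S : Setting n N p q α L₁ L₂ aH) (Du : Pt n → Mat N n) (z : Pt n) : ℝ :=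
  Hf S.a p q z (mnorm (Du z))

/-- `H(z,|F|)`. -/
def HFf (S : Setting n N p q α L₁ L₂ aH) (z : Pt n) : ℝ :=
  Hf S.a p q z (mnorm (S.F z))

/-- Componentwise integral average `(u)_E` of a vector-valued function. -/
def vavg {n N : ℕ} (u : Pt n → Vec N) (E : Set (Pt n)) : Vec N := fun i => ⨍ z in E, u z i

/-- The `p`-intrinsic hypotheses \eqref{eq_pcase}-\eqref{eq_rho_decay}. -/
structure PHyp (S : Setting n N p q α L₁ L₂ aH) (Du : Pt n → Mat N n)
    (z₀ : Pt n) (π ρ δ : ℝ) : Prop where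
  hz₀ : z₀ ∈ cyl S.Ω S.T
  hπ : 1 < π
  hρ : ρ ∈ Set.Ioo (0 : ℝ) 1
  hcase : S.a z₀ * π ^ q ≤ π ^ p
  hsub : Qp p z₀ π (16 * ρ) ⊆ cyl S.Ω S.T
  hlow : π ^ (δ * p) ≤ ⨍ z in Qp p z₀ π ρ, (HDu S Du z + HFf S z) ^ δ
  hup : (⨍ z in Qp p z₀ π (16 * ρ), (HDu S Du z + HFf S z) ^ δ) ≤ π ^ (δ * p)
  hdecay : ρ ^ α ≤ π ^ (p - q)

/-- The `(p,q)`-intrinsic hypotheses \eqref{eq_pqcase}-\eqref{eq_pq4}. -/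
structure PQHyp (S : Setting n N p q α L₁ L₂ aH) (Du : Pt n → Mat N n)
    (z₀ : Pt n) (π ρ δ : ℝ) : Prop where
  hz₀ : z₀ ∈ cyl S.Ω S.T
  hπ : 1 < π
  hρ : ρ ∈ Set.Ioo (0 : ℝ) 1
  hcase : π ^ p < S.a z₀ * π ^ q
  hsub : Gpq S.a p q z₀ π (16 * ρ) ⊆ cyl S.Ω S.T
  hcomp : ∀ z ∈ Qc z₀ (10 * ρ), S.a z₀ / 2 ≤ S.a z ∧ S.a z ≤ 2 * S.a z₀
  hlow : Hf S.a p q z₀ π ^ δ ≤ ⨍ z in Gpq S.a p q z₀ π ρ, (HDu S Du z + HFf S z) ^ δ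
  hup : (⨍ z in Gpq S.a p q z₀ π (16 * ρ), (HDu S Du z + HFf S z) ^ δ) ≤ Hf S.a p q z₀ π ^ δ

/-- Strong maximal function over parabolic cylinders. -/
def strongMax {n : ℕ} (f : Pt n → ℝ) (z : Pt n) : ℝ :=
  sSup {m : ℝ | ∃ (w : Pt n) (r s : ℝ), 0 < r ∧ 0 < s ∧ z ∈ Qrs w r s ∧
    m = ⨍ y in Qrs w r s, |f y|}

/-- The function `g = (|∇u| + |u−u₀|/ρ + |F|) χ_{𝒬₂}`. -/
def gW (S : Setting n N p q α L₁ L₂ aH) (u : Pt n → Vec N) (Du : Pt n → Mat N n)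
    (Q2 : Set (Pt n)) (ρ : ℝ) (z : Pt n) : ℝ :=
  Q2.indicator (fun w => mnorm (Du w) + vnorm (u w - vavg u Q2) / ρ + mnorm (S.F w)) z

/-- Hölder extension of `a` to all of ℝ^{n+1}. -/
def aExt (S : Setting n N p q α L₁ L₂ aH) (Q2 : Set (Pt n)) (z : Pt n) : ℝ :=
  sInf {v : ℝ | ∃ w ∈ cyl S.Ω S.T,
    v = Q2.indicator S.a w + aH * (‖z.1 - w.1‖ ^ α + |z.2 - w.2| ^ (α / 2))}

/-- Hölder extension of `a` truncated between `inf_{𝒬₂} a` and `sup_{𝒬₂} a`. -/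
def aStar (S : Setting n N p q α L₁ L₂ aH) (Q2 : Set (Pt n)) (z : Pt n) : ℝ :=
  max (min (aExt S Q2 z) (sSup (S.a '' Q2))) (sInf (S.a '' Q2))

/-- The maximal weight `Υ(z) = (M(g^{q−1} + (a g^q)^{(q−1)/p})(z))^{p/(q−1)}`. -/
def Ups (S : Setting n N p q α L₁ L₂ aH) (u : Pt n → Vec N) (Du : Pt n → Mat N n)
    (Q2 : Set (Pt n)) (ρ : ℝ) (z : Pt n) : ℝ :=
  strongMax (fun w => gW S u Du Q2 ρ w ^ (q - 1)
      + (aStar S Q2 w * gW S u Du Q2 ρ w ^ q) ^ ((q - 1) / p)) z ^ (p / (q - 1))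

/-- `Υ̂(z) = max{Υ(z), θΠ}`. -/
def UpsHat (S : Setting n N p q α L₁ L₂ aH) (u : Pt n → Vec N) (Du : Pt n → Mat N n)
    (Q2 : Set (Pt n)) (ρ θ Pi' : ℝ) (z : Pt n) : ℝ :=
  max (Ups S u Du Q2 ρ z) (θ * Pi')

/-- `‖a‖_{L^∞(Ω_T)}`. -/
def supA (S : Setting n N p q α L₁ L₂ aH) : ℝ := sSup (S.a '' cyl S.Ω S.T)

/-- The constant `K = ((1+‖a‖_∞)/|B₁| ∬ Υ^μ)^{α/(n+2)}`. -/
def Kconst (S : Setting n N p q α L₁ L₂ aH) (u : Pt n → Vec N) (Du : Pt n → Mat N n)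
    (Q2 : Set (Pt n)) (ρ μ : ℝ) : ℝ :=
  (((1 + supA S) / (volume (Metric.ball (0 : Spc n) 1)).toReal)
      * ∫ z, Ups S u Du Q2 ρ z ^ μ) ^ (α / ((n : ℝ) + 2))

/-- Conditions \eqref{def_mu}-\eqref{def_mu_2} on `μ`. -/
def muCond (n : ℕ) (p q α μ : ℝ) : Prop :=
  max (1 - 2 / q + ((n : ℝ) + 2) * (q - p) / (q * α)) ((q - 1) / p) < μ ∧ μ < 1 ∧
    (1 / μ - 1) * (2 * (n : ℝ)) / (((n : ℝ) + 2) * q) + (n : ℝ) / ((n : ℝ) + 2) ≤ p / q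

/-- Condition \eqref{def_mfs} on `γ`. -/
def gammaCond (n : ℕ) (p q α μ γ : ℝ) : Prop :=
  0 < γ ∧ γ < 1 ∧ -(2 * α) / ((n : ℝ) + 2) + α * q * (1 - μ) / ((n : ℝ) + 2) < p - q - γ

/-- Condition \eqref{def_mfc} on the structural constant `c₀`. -/
def c0Cond (S : Setting n N p q α L₁ L₂ aH) (u : Pt n → Vec N) (Du : Pt n → Mat N n)
    (Q2 : Set (Pt n)) (ρ θ μ γ c₀ : ℝ) : Prop :=
  1 < c₀ ∧
    Kconst S u Du Q2 ρ μ * (θ * c₀ / (2 * (1 + supA S))) ^ (-(γ / p))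
      ≤ 1 / (800 * (1 + aH))

/-- The cylinder `𝒬` of \eqref{def_Qi}: `p`-intrinsic or `(p,q)`-intrinsic by phase. -/
def QorG (S : Setting n N p q α L₁ L₂ aH) (z₀ : Pt n) (π r : ℝ) : Set (Pt n) :=
  if S.a z₀ * π ^ q ≤ π ^ p then Qp p z₀ π r else Gpq S.a p q z₀ π r

/-- Half-length `σ` of the time interval of `𝒬`. -/
def sigmaOf (S : Setting n N p q α L₁ L₂ aH) (z₀ : Pt n) (π r : ℝ) : ℝ :=
  if S.a z₀ * π ^ q ≤ π ^ p then π ^ (2 - p) * r ^ 2 else π ^ 2 / Hf S.a p q z₀ π * r ^ 2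

/-- `Π_{z₀}` of \eqref{def_Pizo}. -/
def PiZ (S : Setting n N p q α L₁ L₂ aH) (z₀ : Pt n) (π : ℝ) : ℝ :=
  if S.a z₀ * π ^ q ≤ π ^ p then Hf S.a p q z₀ π else π ^ p

/-- Upper level set `Ψ(Λ)` of `H(z,|∇u|)`. -/
def PsiSet (S : Setting n N p q α L₁ L₂ aH) (Du : Pt n → Mat N n) (Λ : ℝ) : Set (Pt n) :=
  {z ∈ cyl S.Ω S.T | Λ < HDu S Du z}

/-- Upper level set `Φ(Λ)` of `H(z,|F|)`. -/
def PhiSet (S : Setting n N p q α L₁ L₂ aH) (Λ : ℝ) : Set (Pt n) :=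
  {z ∈ cyl S.Ω S.T | Λ < HFf S z}

/-- `Π > c₀` for the structural constant `c₀` of the paper. -/
def PiBig (S : Setting n N p q α L₁ L₂ aH) (u : Pt n → Vec N) (Du : Pt n → Mat N n)
    (z₀ : Pt n) (π ρ : ℝ) : Prop :=
  ∃ θ μ γ c₀ : ℝ, θ ∈ Set.Ioo (0 : ℝ) 1 ∧ muCond n p q α μ ∧ gammaCond n p q α μ γ ∧
    c0Cond S u Du (QorG S z₀ π (4 * ρ)) ρ θ μ γ c₀ ∧ c₀ < Hf S.a p q z₀ π

/-- `u ∈ C(0,T; L²(Ω,ℝᴺ))`. -/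
def ContL2 (S : Setting n N p q α L₁ L₂ aH) (u : Pt n → Vec N) : Prop :=
  (∀ t ∈ Set.Ioo (0 : ℝ) S.T, IntegrableOn (fun x => vnorm (u (x, t)) ^ 2) S.Ω) ∧
  ∀ t₁ ∈ Set.Ioo (0 : ℝ) S.T, ∀ ε > (0 : ℝ), ∃ η > (0 : ℝ), ∀ t₂ ∈ Set.Ioo (0 : ℝ) S.T,
    |t₂ - t₁| < η → ∫ x in S.Ω, vnorm (u (x, t₂) - u (x, t₁)) ^ 2 < ε

/-- The Vitali covering cylinder `U(w)`: `Q^{π_w}_{2ρ_w}(w)` or `G^{π_w}_{2ρ_w}(w)` by phase. -/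
def Uw (S : Setting n N p q α L₁ L₂ aH) (w : Pt n) (πw ρw : ℝ) : Set (Pt n) :=
  if S.a w * πw ^ q ≤ πw ^ p then Qp p w πw (2 * ρw) else Gpq S.a p q w πw (2 * ρw)

end DoublePhase

open DoublePhase

/-!
The estimate is pointwise before it is averaged. In the `p`-phase `a(z₀) ≤ π^{p-q}`, and on the
cylinder `a` deviates from `a(z₀)` by at most `[a]_α s^α ≲ ρ^α ≤ π^{p-q}`; hence `a ≲ π^{p-q}`
throughout. Writing `a = a^{1/q} a^{(q-1)/q}` and bounding only the first factor, by
`a^{1/q} ≲ π^{(p-q)/q} = π^{-1+p/q}`, turns `a |∇u|^{q-1}` into the second term of the right-hand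
side. The `(p-1)`-powers are absorbed by superadditivity of `t ↦ t^{p-1}`. What is left is to see
that the averages on the right are finite, which is where `(q-1)/p < δ` enters.
-/

namespace DoublePhase

section Averages

variable {X : Type*} [MeasurableSpace X] {μ : Measure X} {p q M : ℝ} {a f g : X → ℝ}

theorem memLp_ofReal_iff_integrable_rpow {r : ℝ} (hr : 0 < r) (hf : AEStronglyMeasurable f μ)
    (hf0 : ∀ x, 0 ≤ f x) :
    MemLp f (ENNReal.ofReal r) μ ↔ Integrable (fun x => f x ^ r) μ := by
  rw [← integrable_norm_rpow_iff hf (ENNReal.ofReal_pos.2 hr).ne' ENNReal.ofReal_ne_top,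
    ENNReal.toReal_ofReal hr.le]
  simp only [Real.norm_of_nonneg (hf0 _)]

theorem average_le_average_add_const_mul_average {φ : X → ℝ} {c : ℝ} (hφ : ∀ x, 0 ≤ φ x)
    (hf : Integrable f μ) (hg : Integrable g μ) (h : ∀ᵐ x ∂μ, φ x ≤ f x + c * g x) :
    ⨍ x, φ x ∂μ ≤ ⨍ x, f x ∂μ + c * ⨍ x, g x ∂μ := by
  have hg' := hg.to_average.const_mul c
  calc ⨍ x, φ x ∂μ ≤ ⨍ x, (f x + c * g x) ∂μ :=
        integral_mono_of_nonneg (.of_forall hφ) (hf.to_average.add hg')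
          (Measure.ae_smul_measure h _)
    _ = ⨍ x, f x ∂μ + c * ⨍ x, g x ∂μ := by
        rw [average, integral_add hf.to_average hg', integral_const_mul, average, average]

theorem le_rpow_mul_rpow_of_le {b c : ℝ} (hq : 1 ≤ q) (hb : 0 ≤ b) (hbc : b ≤ c) :
    b ≤ c ^ (1 / q) * b ^ ((q - 1) / q) := by
  have hq0 : 0 < q := zero_lt_one.trans_le hq
  have hexp : 0 ≤ (q - 1) / q := div_nonneg (sub_nonneg.2 hq) hq0.le
  calc b = b ^ (1 / q + (q - 1) / q) := by
        rw [← add_div, add_sub_cancel, div_self hq0.ne', Real.rpow_one]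
    _ = b ^ (1 / q) * b ^ ((q - 1) / q) := Real.rpow_add_of_nonneg hb (by positivity) hexp
    _ ≤ c ^ (1 / q) * b ^ ((q - 1) / q) := by gcongr

theorem lower_order_le {b c x y : ℝ} (hp : 2 ≤ p) (hq : 1 ≤ q) (hb : 0 ≤ b) (hbc : b ≤ c)
    (hx : 0 ≤ x) (hy : 0 ≤ y) :
    x ^ (p - 1) + b * x ^ (q - 1) + y ^ (p - 1) + b * y ^ (q - 1)
      ≤ (x + y) ^ (p - 1)
        + c ^ (1 / q) * (b ^ ((q - 1) / q) * (x ^ (q - 1) + y ^ (q - 1))) := by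
  have hpow : x ^ (p - 1) + y ^ (p - 1) ≤ (x + y) ^ (p - 1) :=
    Real.add_rpow_le_rpow_add hx hy (by linarith)
  have hcoeff : b * (x ^ (q - 1) + y ^ (q - 1))
      ≤ c ^ (1 / q) * b ^ ((q - 1) / q) * (x ^ (q - 1) + y ^ (q - 1)) :=
    mul_le_mul_of_nonneg_right (le_rpow_mul_rpow_of_le hq hb hbc) (by positivity)
  linarith

theorem integrable_add_rpow_sub_one [IsFiniteMeasure μ] (hp : 1 < p) (hpq : p ≤ q)
    (hf0 : ∀ x, 0 ≤ f x) (hg0 : ∀ x, 0 ≤ g x)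
    (hf : MemLp f (ENNReal.ofReal (q - 1)) μ) (hg : MemLp g (ENNReal.ofReal (q - 1)) μ) :
    Integrable (fun x => (f x + g x) ^ (p - 1)) μ := by
  have hfg : MemLp (f + g) (ENNReal.ofReal (p - 1)) μ :=
    (hf.add hg).mono_exponent (ENNReal.ofReal_le_ofReal (by linarith))
  exact (memLp_ofReal_iff_integrable_rpow (by linarith) hfg.aestronglyMeasurable
    fun x => add_nonneg (hf0 x) (hg0 x)).1 hfg

theorem integrable_coeff_rpow_mul_rpow_add_rpow (hq : 1 < q)
    (ha : AEMeasurable a μ) (ha0 : ∀ x, 0 ≤ a x) (haM : ∀ᵐ x ∂μ, a x ≤ M)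
    (hf0 : ∀ x, 0 ≤ f x) (hg0 : ∀ x, 0 ≤ g x)
    (hf : MemLp f (ENNReal.ofReal (q - 1)) μ) (hg : MemLp g (ENNReal.ofReal (q - 1)) μ) :
    Integrable (fun x => a x ^ ((q - 1) / q) * (f x ^ (q - 1) + g x ^ (q - 1))) μ := by
  have hq1 : 0 < q - 1 := sub_pos.2 hq
  have hf' := (memLp_ofReal_iff_integrable_rpow hq1 hf.aestronglyMeasurable hf0).1 hf
  have hg' := (memLp_ofReal_iff_integrable_rpow hq1 hg.aestronglyMeasurable hg0).1 hg
  refine (hf'.add hg').bdd_mul (c := M ^ ((q - 1) / q))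
    (ha.pow_const _).aestronglyMeasurable ?_
  filter_upwards [haM] with x hx
  rw [Real.norm_of_nonneg (Real.rpow_nonneg (ha0 x) _)]
  exact Real.rpow_le_rpow (ha0 x) hx (div_nonneg hq1.le (by linarith))

theorem average_lower_order_le [IsFiniteMeasure μ] (hp : 2 ≤ p) (hpq : p ≤ q)
    (ha : AEMeasurable a μ) (ha0 : ∀ x, 0 ≤ a x) (haM : ∀ᵐ x ∂μ, a x ≤ M)
    (hf0 : ∀ x, 0 ≤ f x) (hg0 : ∀ x, 0 ≤ g x)
    (hf : MemLp f (ENNReal.ofReal (q - 1)) μ) (hg : MemLp g (ENNReal.ofReal (q - 1)) μ) :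
    ⨍ x, (f x ^ (p - 1) + a x * f x ^ (q - 1) + g x ^ (p - 1) + a x * g x ^ (q - 1)) ∂μ
      ≤ ⨍ x, (f x + g x) ^ (p - 1) ∂μ
        + M ^ (1 / q) * ⨍ x, a x ^ ((q - 1) / q) * (f x ^ (q - 1) + g x ^ (q - 1)) ∂μ := by
  refine average_le_average_add_const_mul_average (fun x => ?_)
    (integrable_add_rpow_sub_one (by linarith) hpq hf0 hg0 hf hg)
    (integrable_coeff_rpow_mul_rpow_add_rpow (by linarith) ha ha0 haM hf0 hg0 hf hg) ?_
  · have := ha0 x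
    have := hf0 x
    have := hg0 x
    positivity
  · filter_upwards [haM] with x hx
    exact lower_order_le hp (by linarith) (ha0 x) hx (hf0 x) (hg0 x)

end Averages

section Cylinders

variable {n : ℕ} {p q α aH K π r s : ℝ} {z₀ z : Pt n} {a : Pt n → ℝ}

theorem measurableSet_Qrs : MeasurableSet (Qrs z₀ r s) :=
  measurableSet_ball.prod measurableSet_Ioo

theorem isBounded_Qrs : Bornology.IsBounded (Qrs z₀ r s) :=
  isBounded_ball.prod (isBounded_Ioo _ _)

theorem Qrs_subset_Qrs {r' s' : ℝ} (hr : r ≤ r') (hs : s ≤ s') : Qrs z₀ r s ⊆ Qrs z₀ r' s' :=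
  prod_mono (ball_subset_ball hr) (Ioo_subset_Ioo (by linarith) (by linarith))

theorem Qp_subset_Qp (hπ : 0 ≤ π) (hr : 0 ≤ r) (hrs : r ≤ s) : Qp p z₀ π r ⊆ Qp p z₀ π s :=
  Qrs_subset_Qrs hrs (by gcongr)

theorem Qp_subset_Qc (hp : 2 ≤ p) (hπ : 1 ≤ π) : Qp p z₀ π s ⊆ Qc z₀ s :=
  Qrs_subset_Qrs le_rfl <| mul_le_of_le_one_left (sq_nonneg s) <|
    Real.rpow_le_one_of_one_le_of_nonpos hπ (by linarith)

theorem max_rpow_le_rpow_of_mem_Qc (hα : 0 ≤ α) (hs : 0 ≤ s) (hz : z ∈ Qc z₀ s) :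
    max (‖z.1 - z₀.1‖ ^ α) (|z.2 - z₀.2| ^ (α / 2)) ≤ s ^ α := by
  obtain ⟨hx, ht⟩ := hz
  rw [mem_ball, dist_eq_norm] at hx
  have ht' : |z.2 - z₀.2| ≤ s ^ 2 := abs_le.2 ⟨by linarith [ht.1], by linarith [ht.2]⟩
  refine max_le (Real.rpow_le_rpow (norm_nonneg _) hx.le hα) ?_
  calc |z.2 - z₀.2| ^ (α / 2) ≤ (s ^ 2) ^ (α / 2) := by gcongr
    _ = s ^ α := by rw [← Real.rpow_natCast_mul hs]; congr 1; push_cast; ring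

theorem coeff_le_mul_rpow_of_mem_Qp (hp : 2 ≤ p) (hα : 0 ≤ α) (haH : 0 ≤ aH) (hπ : 1 ≤ π)
    (hs : 0 ≤ s) (hcase : a z₀ * π ^ q ≤ π ^ p) (hdecay : s ^ α ≤ K * π ^ (p - q))
    (hz : z ∈ Qp p z₀ π s)
    (hHol : |a z - a z₀| ≤ aH * max (‖z.1 - z₀.1‖ ^ α) (|z.2 - z₀.2| ^ (α / 2))) :
    a z ≤ (1 + K * aH) * π ^ (p - q) := by
  have hπ0 : 0 < π := zero_lt_one.trans_le hπ
  have hcentre : a z₀ ≤ π ^ (p - q) := by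
    rwa [Real.rpow_sub hπ0, le_div_iff₀ (by positivity)]
  have hosc : a z - a z₀ ≤ aH * (K * π ^ (p - q)) :=
    calc a z - a z₀ ≤ aH * max (‖z.1 - z₀.1‖ ^ α) (|z.2 - z₀.2| ^ (α / 2)) :=
          (le_abs_self _).trans hHol
      _ ≤ aH * s ^ α := by
          gcongr; exact max_rpow_le_rpow_of_mem_Qc hα hs (Qp_subset_Qc hp hπ hz)
      _ ≤ aH * (K * π ^ (p - q)) := by gcongr
  linarith

end Cylinders

end DoublePhase

theorem p_intrinsic_lower_order_general {n : ℕ} {p q α aH K π s : ℝ} {z₀ : Pt n}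
    {a f g : Pt n → ℝ} (hp : 2 ≤ p) (hpq : p ≤ q) (hα : 0 ≤ α) (haH : 0 ≤ aH) (hπ : 1 ≤ π)
    (hs : 0 < s) (ha : AEMeasurable a (volume.restrict (Qp p z₀ π s))) (ha0 : ∀ z, 0 ≤ a z)
    (hHol : ∀ z ∈ Qp p z₀ π s,
      |a z - a z₀| ≤ aH * max (‖z.1 - z₀.1‖ ^ α) (|z.2 - z₀.2| ^ (α / 2)))
    (hcase : a z₀ * π ^ q ≤ π ^ p) (hdecay : s ^ α ≤ K * π ^ (p - q))
    (hf0 : ∀ z, 0 ≤ f z) (hg0 : ∀ z, 0 ≤ g z)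
    (hf : MemLp f (ENNReal.ofReal (q - 1)) (volume.restrict (Qp p z₀ π s)))
    (hg : MemLp g (ENNReal.ofReal (q - 1)) (volume.restrict (Qp p z₀ π s))) :
    (⨍ z in Qp p z₀ π s,
        (f z ^ (p - 1) + a z * f z ^ (q - 1) + g z ^ (p - 1) + a z * g z ^ (q - 1)))
      ≤ (⨍ z in Qp p z₀ π s, (f z + g z) ^ (p - 1))
        + (1 + K * aH) ^ (1 / q) * π ^ (-1 + p / q) * (⨍ z in Qp p z₀ π s,
            a z ^ ((q - 1) / q) * (f z ^ (q - 1) + g z ^ (q - 1))) := by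
  have hπ0 : 0 < π := zero_lt_one.trans_le hπ
  have hK : 0 ≤ K :=
    nonneg_of_mul_nonneg_left ((Real.rpow_nonneg hs.le α).trans hdecay) (by positivity)
  have hconst : ((1 + K * aH) * π ^ (p - q)) ^ (1 / q)
      = (1 + K * aH) ^ (1 / q) * π ^ (-1 + p / q) := by
    have hexp : (p - q) * (1 / q) = -1 + p / q := by
      field_simp [show q ≠ 0 by linarith]
      ring
    rw [Real.mul_rpow (by positivity) (by positivity), ← Real.rpow_mul hπ0.le, hexp]
  have : IsFiniteMeasure (volume.restrict (Qp p z₀ π s)) :=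
    isFiniteMeasure_restrict.2 isBounded_Qrs.measure_lt_top.ne
  rw [← hconst]
  exact average_lower_order_le hp hpq ha ha0
    (ae_restrict_of_forall_mem measurableSet_Qrs fun z hz =>
      coeff_le_mul_rpow_of_mem_Qp hp hα haH hπ hs.le hcase hdecay hz (hHol z hz)) hf0 hg0 hf hg

namespace DoublePhase

section Solutions

variable {n N : ℕ} {p q α L₁ L₂ aH δ : ℝ}

theorem mnorm_nonneg (A : Mat N n) : 0 ≤ mnorm A := Real.sqrt_nonneg _

theorem measurable_mnorm : Measurable (mnorm : Mat N n → ℝ) := by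
  unfold mnorm mdot
  fun_prop

theorem memLp_mnorm_of_integrable_Hf_rpow {μ : Measure (Pt n)} {a : Pt n → ℝ}
    {ξ : Pt n → Mat N n} (ha0 : ∀ z, 0 ≤ a z) (hξ : Measurable ξ) (hp : 0 < p) (hδ : 0 < δ)
    (hint : Integrable (fun z => Hf a p q z (mnorm (ξ z)) ^ δ) μ) :
    MemLp (fun z => mnorm (ξ z)) (ENNReal.ofReal (p * δ)) μ := by
  have hmeas : Measurable fun z => mnorm (ξ z) := measurable_mnorm.comp hξ
  refine (memLp_ofReal_iff_integrable_rpow (by positivity) hmeas.aestronglyMeasurable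
    fun z => mnorm_nonneg _).2 <| hint.mono' (hmeas.pow_const _).aestronglyMeasurable <|
    .of_forall fun z => ?_
  have hξ0 := mnorm_nonneg (ξ z)
  rw [Real.norm_of_nonneg (Real.rpow_nonneg hξ0 _), Real.rpow_mul hξ0]
  have hHf : mnorm (ξ z) ^ p ≤ Hf a p q z (mnorm (ξ z)) :=
    le_add_of_nonneg_right (mul_nonneg (ha0 z) (Real.rpow_nonneg hξ0 q))
  gcongr

variable {S : Setting n N p q α L₁ L₂ aH} {E : Set (Pt n)}

theorem Setting.isBounded_cyl (S : Setting n N p q α L₁ L₂ aH) :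
    Bornology.IsBounded (cyl S.Ω S.T) :=
  S.hΩb.prod (isBounded_Ioo 0 S.T)

theorem Setting.q_sub_one_le_p (S : Setting n N p q α L₁ L₂ aH) : q - 1 ≤ p := by
  have hgap : 2 * α / ((n : ℝ) + 2) ≤ 1 := by
    rw [div_le_one (by positivity)]
    linarith [S.hα.2, Nat.cast_nonneg (α := ℝ) n]
  linarith [S.hqub]

theorem memLp_mnorm_q_sub_one {ξ : Pt n → Mat N n} (hξ : Measurable ξ) (hδ : 0 < δ)
    (hint : IntegrableOn (fun z => Hf S.a p q z (mnorm (ξ z)) ^ δ) (cyl S.Ω S.T))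
    (hqδ : q - 1 ≤ p * δ) (hE : E ⊆ cyl S.Ω S.T) :
    MemLp (fun z => mnorm (ξ z)) (ENNReal.ofReal (q - 1)) (volume.restrict E) := by
  have : IsFiniteMeasure (volume.restrict E) :=
    isFiniteMeasure_restrict.2 (S.isBounded_cyl.subset hE).measure_lt_top.ne
  exact (memLp_mnorm_of_integrable_Hf_rpow S.ha0 hξ (by linarith [S.hp2]) hδ
    (hint.mono_set hE)).mono_exponent (ENNReal.ofReal_le_ofReal hqδ)

theorem VeryWeakSolution.memLp_mnorm_gradient {u : Pt n → Vec N} {Du : Pt n → Mat N n}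
    (hu : VeryWeakSolution S u Du δ) (hδ : (q - 1) / p < δ) (hE : E ⊆ cyl S.Ω S.T) :
    MemLp (fun z => mnorm (Du z)) (ENNReal.ofReal (q - 1)) (volume.restrict E) :=
  memLp_mnorm_q_sub_one hu.hDuM hu.hδ.1 hu.henergy
    ((div_lt_iff₀' (by linarith [S.hp2])).1 hδ).le hE

theorem Setting.memLp_mnorm_source (S : Setting n N p q α L₁ L₂ aH) (hE : E ⊆ cyl S.Ω S.T) :
    MemLp (fun z => mnorm (S.F z)) (ENNReal.ofReal (q - 1)) (volume.restrict E) :=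
  memLp_mnorm_q_sub_one S.hFM one_pos (by simpa only [Real.rpow_one] using S.hFint)
    (by simpa only [mul_one] using S.q_sub_one_le_p) hE

variable {Du : Pt n → Mat N n} {z₀ : Pt n} {π ρ s : ℝ}

theorem PHyp.Qp_subset_cyl (H : PHyp S Du z₀ π ρ δ) (hs0 : 0 ≤ s) (hs : s ≤ 16 * ρ) :
    Qp p z₀ π s ⊆ cyl S.Ω S.T :=
  (Qp_subset_Qp (zero_le_one.trans H.hπ.le) hs0 hs).trans H.hsub

theorem PHyp.rpow_radius_le (H : PHyp S Du z₀ π ρ δ) (hs0 : 0 ≤ s) (hs : s ≤ 4 * ρ) :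
    s ^ α ≤ 4 * π ^ (p - q) := by
  have h4 : (4 : ℝ) ^ α ≤ 4 := Real.rpow_le_self_of_one_le (by norm_num) S.hα.2
  have hρ := H.hρ.1
  calc s ^ α ≤ (4 * ρ) ^ α := Real.rpow_le_rpow hs0 hs S.hα.1.le
    _ = 4 ^ α * ρ ^ α := Real.mul_rpow (by norm_num) hρ.le
    _ ≤ 4 * π ^ (p - q) := by gcongr; exact H.hdecay

theorem PHyp.average_lower_order_le {u : Pt n → Vec N} (H : PHyp S Du z₀ π ρ δ)
    (hu : VeryWeakSolution S u Du δ) (hδ : (q - 1) / p < δ) (hs0 : 0 < s) (hs : s ≤ 4 * ρ) :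
    (⨍ z in Qp p z₀ π s,
        (mnorm (Du z) ^ (p - 1) + S.a z * mnorm (Du z) ^ (q - 1)
          + mnorm (S.F z) ^ (p - 1) + S.a z * mnorm (S.F z) ^ (q - 1)))
      ≤ (⨍ z in Qp p z₀ π s, (mnorm (Du z) + mnorm (S.F z)) ^ (p - 1))
        + (1 + 4 * aH) ^ (1 / q) * π ^ (-1 + p / q) * (⨍ z in Qp p z₀ π s,
            S.a z ^ ((q - 1) / q) * (mnorm (Du z) ^ (q - 1) + mnorm (S.F z) ^ (q - 1))) := by
  have hsub := H.Qp_subset_cyl hs0.le (by linarith [H.hρ.1])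
  exact p_intrinsic_lower_order_general S.hp2.le S.hpq.le S.hα.1.le S.haH.le H.hπ.le hs0
    S.haM.aemeasurable S.ha0
    (fun z hz => S.haHol z.1 (hsub hz).1 z₀.1 H.hz₀.1 z.2 (hsub hz).2 z₀.2 H.hz₀.2)
    H.hcase (H.rpow_radius_le hs0.le hs) (fun z => mnorm_nonneg (Du z))
    (fun z => mnorm_nonneg (S.F z)) (hu.memLp_mnorm_gradient hδ hsub) (S.memLp_mnorm_source hsub)

theorem average_mnorm_add_mnorm_rpow_nonneg {μ : Measure (Pt n)} (ξ η : Pt n → Mat N n) (r : ℝ) :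
    0 ≤ ⨍ z, (mnorm (ξ z) + mnorm (η z)) ^ r ∂μ :=
  integral_nonneg fun _ => Real.rpow_nonneg (add_nonneg (mnorm_nonneg _) (mnorm_nonneg _)) r

end Solutions

end DoublePhase

/-- Lemma 4.1: estimate for the lower-order averages in the `p`-intrinsic case. -/
theorem p_intrinsic_lower_order (n N : ℕ) (p q α L₁ L₂ aH : ℝ) :
    ∃ c : ℝ, 0 < c ∧
      ∀ (S : Setting n N p q α L₁ L₂ aH) (u : Pt n → Vec N) (Du : Pt n → Mat N n) (δ : ℝ),
        VeryWeakSolution S u Du δ →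
        ∀ (z₀ : Pt n) (π ρ : ℝ), PHyp S Du z₀ π ρ δ →
        ∀ θ ∈ Set.Ioc ((q - 1) / p) δ, ∀ s ∈ Set.Icc (2 * ρ) (4 * ρ),
          (⨍ z in Qp p z₀ π s,
              (mnorm (Du z) ^ (p - 1) + S.a z * mnorm (Du z) ^ (q - 1)
                + mnorm (S.F z) ^ (p - 1) + S.a z * mnorm (S.F z) ^ (q - 1)))
            ≤ c * (⨍ z in Qp p z₀ π s, (mnorm (Du z) + mnorm (S.F z)) ^ (p - 1))
              + c * π ^ (-1 + p / q) * (⨍ z in Qp p z₀ π s,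
                  S.a z ^ ((q - 1) / q) * (mnorm (Du z) ^ (q - 1) + mnorm (S.F z) ^ (q - 1)))
              + c * (⨍ z in Qp p z₀ π s,
                  (mnorm (Du z) + mnorm (S.F z)) ^ (θ * p)) ^ ((p - 1) / (θ * p)) := by
  refine ⟨(1 + 4 * |aH|) ^ (1 / q), by positivity, fun S u Du δ hu z₀ π ρ H θ hθ s hs => ?_⟩
  have hs0 : 0 < s := (mul_pos two_pos H.hρ.1).trans_le hs.1
  rw [abs_of_pos S.haH]
  have hc : 1 ≤ (1 + 4 * aH) ^ (1 / q) := Real.one_le_rpow (by linarith [S.haH])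
    (one_div_nonneg.2 (by linarith [S.hp2, S.hpq]))
  have havg (r : ℝ) := average_mnorm_add_mnorm_rpow_nonneg (μ := volume.restrict (Qp p z₀ π s))
    Du S.F r
  calc _ ≤ _ := H.average_lower_order_le hu (hθ.1.trans_le hθ.2) hs0 hs.2
    _ ≤ _ := add_le_add_left (le_mul_of_one_le_left (havg _) hc) _
    _ ≤ _ := le_add_of_nonneg_right <|
        mul_nonneg (zero_le_one.trans hc) (Real.rpow_nonneg (havg _) _)
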